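/- Let Ω = (a,b) × (c,d) be an open rectangle in ℝ², let 0 < α₁ < 1 and 0 < α₂ < 1, and let v : ℝ² → ℝ be smooth with compact support contained in Ω. Then the gradient–fractional-integral form is coercive: ∫_Ω [ (∂_x v)(x,y) · (𝓘_x^{α₁} ∂_x v)(x,y) + (∂_y v)(x,y) · (𝓘_y^{α₂} ∂_y v)(x,y) ] dx dy ≥ min(cos(α₁π/2), cos(α₂π/2)) · ∫_Ω [ ((𝓘_x^{α₁/2} ∂_x v)(x,y))² + ((𝓘_y^{α₂/2} ∂_y v)(x,y))² ] dx dy. -/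

import Mathlib

open MeasureTheory Real Set

/-- Partial left Riemann–Liouville fractional integral in the `x`-variable, base point `a`:
`(𝓘_x^{α} p)(x,y) = (1/Γ(α)) ∫_a^x (x−s)^{α−1} p(s,y) ds`. -/
noncomputable def leftRLx (a α : ℝ) (p : ℝ × ℝ → ℝ) (z : ℝ × ℝ) : ℝ :=
  (1 / Real.Gamma α) * ∫ s in a..z.1, (z.1 - s) ^ (α - 1) * p (s, z.2)

/-- Partial left Riemann–Liouville fractional integral in the `y`-variable, base point `c`:
`(𝓘_y^{α} p)(x,y) = (1/Γ(α)) ∫_c^y (y−t)^{α−1} p(x,t) dt`. -/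
noncomputable def leftRLy (c α : ℝ) (p : ℝ × ℝ → ℝ) (z : ℝ × ℝ) : ℝ :=
  (1 / Real.Gamma α) * ∫ t in c..z.2, (z.2 - t) ^ (α - 1) * p (z.1, t)

/-- Partial derivative with respect to the first variable. -/
noncomputable def partialX (v : ℝ × ℝ → ℝ) (z : ℝ × ℝ) : ℝ :=
  fderiv ℝ v z (1, 0)

/-- Partial derivative with respect to the second variable. -/
noncomputable def partialY (v : ℝ × ℝ → ℝ) (z : ℝ × ℝ) : ℝ :=
  fderiv ℝ v z (0, 1)

theorem integrableOn_rpow_mul_exp_neg_mul {a r : ℝ} (ha : 0 < a) (hr : 0 < r) :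
    IntegrableOn (fun t : ℝ => t ^ (a - 1) * Real.exp (-(r * t))) (Ioi 0) := by
  have h := integrableOn_rpow_mul_exp_neg_mul_rpow (p := 1) (s := a - 1) (b := r)
    (by linarith) one_pos hr
  simpa [Real.rpow_one, neg_mul] using h

theorem integrableOn_and_integral_rpow_mul_add_rpow {β h : ℝ} (hβ0 : 0 < β) (hβ1 : β < 1 / 2)
    (hh : 0 < h) :
    IntegrableOn (fun u : ℝ => u ^ (β - 1) * (u + h) ^ (β - 1)) (Ioi 0) ∧
      ∫ u in Ioi (0 : ℝ), u ^ (β - 1) * (u + h) ^ (β - 1) =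
        Real.Gamma (1 - 2 * β) * Real.Gamma β / Real.Gamma (1 - β) * h ^ (2 * β - 1) := by
  set F : ℝ → ℝ → ℝ := fun u τ =>
    u ^ (β - 1) * (τ ^ ((1 - β) - 1) * Real.exp (-((u + h) * τ))) with hF
  have hG : Real.Gamma (1 - β) ≠ 0 := (Real.Gamma_pos_of_pos (by linarith)).ne'
  have hFτ : ∀ u ∈ Ioi (0 : ℝ), ∫ τ in Ioi (0 : ℝ), F u τ =
      Real.Gamma (1 - β) * (u ^ (β - 1) * (u + h) ^ (β - 1)) := by
    intro u hu
    have hu' : 0 < u + h := add_pos hu hh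
    simp only [hF]
    rw [integral_const_mul, Real.integral_rpow_mul_exp_neg_mul_Ioi (by linarith) hu', one_div,
      Real.inv_rpow hu'.le, ← Real.rpow_neg hu'.le, neg_sub]
    ring
  have hsplit : ∀ u τ : ℝ, F u τ = (τ ^ ((1 - β) - 1) * Real.exp (-(h * τ))) *
      (u ^ (β - 1) * Real.exp (-(τ * u))) := by
    intro u τ
    simp only [hF]
    rw [show -((u + h) * τ) = -(h * τ) + -(τ * u) by ring, Real.exp_add]
    ring
  have hFu : ∀ τ ∈ Ioi (0 : ℝ), ∫ u in Ioi (0 : ℝ), F u τ =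
      Real.Gamma β * (τ ^ ((1 - 2 * β) - 1) * Real.exp (-(h * τ))) := by
    intro τ hτ
    have hτ' : (0 : ℝ) < τ := hτ
    simp only [hsplit]
    rw [integral_const_mul, Real.integral_rpow_mul_exp_neg_mul_Ioi hβ0 hτ', one_div,
      Real.inv_rpow hτ'.le, ← Real.rpow_neg hτ'.le,
      show (1 - 2 * β) - 1 = ((1 - β) - 1) + -β by ring, Real.rpow_add hτ']
    ring
  have hmeas : Measurable (Function.uncurry F) := by
    simp only [hF, Function.uncurry_def]
    fun_prop
  have hint : Integrable (Function.uncurry F)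
      ((volume.restrict (Ioi (0 : ℝ))).prod (volume.restrict (Ioi (0 : ℝ)))) := by
    rw [integrable_prod_iff' hmeas.aestronglyMeasurable]
    refine ⟨?_, ?_⟩
    · filter_upwards [ae_restrict_mem measurableSet_Ioi] with τ hτ
      simp only [Function.uncurry_apply_pair, hsplit]
      exact (integrableOn_rpow_mul_exp_neg_mul hβ0 hτ).const_mul _
    · refine Integrable.congr (f := fun τ : ℝ =>
        Real.Gamma β * (τ ^ ((1 - 2 * β) - 1) * Real.exp (-(h * τ)))) ?_ ?_
      · exact (integrableOn_rpow_mul_exp_neg_mul (by linarith) hh).const_mul _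
      · filter_upwards [ae_restrict_mem measurableSet_Ioi] with τ hτ
        rw [← hFu τ hτ]
        refine setIntegral_congr_fun measurableSet_Ioi fun u hu => ?_
        have : 0 ≤ F u τ := by
          have h1 : (0 : ℝ) < u := hu
          have h2 : (0 : ℝ) < τ := hτ
          simp only [hF]
          positivity
        simp [abs_of_nonneg this]
  constructor
  · have := hint.integral_prod_left
    refine (Integrable.const_mul this (Real.Gamma (1 - β))⁻¹).congr ?_
    filter_upwards [ae_restrict_mem measurableSet_Ioi] with u hu
    simp only [Function.uncurry_apply_pair]
    rw [hFτ u hu, inv_mul_cancel_left₀ hG]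
  · have hswap := integral_integral_swap hint
    rw [setIntegral_congr_fun measurableSet_Ioi hFτ, setIntegral_congr_fun measurableSet_Ioi hFu,
      integral_const_mul, integral_const_mul,
      Real.integral_rpow_mul_exp_neg_mul_Ioi (by linarith) hh, one_div,
      Real.inv_rpow hh.le, ← Real.rpow_neg hh.le, neg_sub] at hswap
    rw [div_mul_eq_mul_div, eq_div_iff hG, mul_comm, hswap]
    ring

/-- The one-sided power kernel `t ↦ t₊ ^ (β - 1)`. -/
noncomputable def rlKernel (β t : ℝ) : ℝ := (Ioi (0 : ℝ)).indicator (fun t => t ^ (β - 1)) t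

theorem measurable_rlKernel (β : ℝ) : Measurable (rlKernel β) :=
  Measurable.indicator (by fun_prop) measurableSet_Ioi

theorem rlKernel_of_pos (β : ℝ) {t : ℝ} (ht : 0 < t) : rlKernel β t = t ^ (β - 1) :=
  indicator_of_mem (s := Ioi (0 : ℝ)) ht _

theorem rlKernel_of_nonpos (β : ℝ) {t : ℝ} (ht : t ≤ 0) : rlKernel β t = 0 :=
  indicator_of_notMem (s := Ioi (0 : ℝ)) (by simpa using ht) _

theorem rlKernel_nonneg (β t : ℝ) : 0 ≤ rlKernel β t :=
  indicator_nonneg (fun _ ht => Real.rpow_nonneg (le_of_lt ht) _) t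

theorem rlKernel_add_rlKernel_neg {β : ℝ} (hβ : β ≠ 1) (t : ℝ) :
    rlKernel β t + rlKernel β (-t) = |t| ^ (β - 1) := by
  rcases lt_trichotomy t 0 with ht | rfl | ht
  · rw [rlKernel_of_nonpos β ht.le, rlKernel_of_pos β (neg_pos.2 ht), abs_of_neg ht, zero_add]
  · simp [rlKernel_of_nonpos, Real.zero_rpow (sub_ne_zero.2 hβ)]
  · rw [rlKernel_of_pos β ht, rlKernel_of_nonpos β (neg_nonpos.2 ht.le), abs_of_pos ht, add_zero]

theorem integrable_and_integral_rlKernel_mul_rlKernel {β : ℝ} (hβ0 : 0 < β) (hβ1 : β < 1 / 2)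
    {s t : ℝ} (hst : s ≠ t) :
    Integrable (fun x => rlKernel β (x - s) * rlKernel β (x - t)) ∧
      ∫ x, rlKernel β (x - s) * rlKernel β (x - t) =
        Real.Gamma (1 - 2 * β) * Real.Gamma β / Real.Gamma (1 - β) * |s - t| ^ (2 * β - 1) := by
  wlog h : s < t generalizing s t
  · have := this hst.symm (lt_of_le_of_ne (not_lt.1 h) hst.symm)
    rw [abs_sub_comm]
    simpa only [mul_comm (rlKernel β (_ - s))] using this
  obtain ⟨h1, h2⟩ := integrableOn_and_integral_rpow_mul_add_rpow hβ0 hβ1 (sub_pos.2 h)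
  have key : ∀ x, rlKernel β (x - s) * rlKernel β (x - t) =
      (Ioi (0 : ℝ)).indicator (fun u => u ^ (β - 1) * (u + (t - s)) ^ (β - 1)) (x - t) := by
    intro x
    by_cases hx : 0 < x - t
    · rw [indicator_of_mem (s := Ioi (0 : ℝ)) hx, rlKernel_of_pos β hx,
        rlKernel_of_pos β (by linarith), mul_comm, sub_add_sub_cancel]
    · rw [indicator_of_notMem (s := Ioi (0 : ℝ)) hx, rlKernel_of_nonpos β (not_lt.1 hx), mul_zero]
  simp only [key]
  constructor
  · exact ((integrable_indicator_iff measurableSet_Ioi).2 h1).comp_sub_right t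
  · rw [integral_sub_right_eq_self (fun x => (Ioi (0 : ℝ)).indicator
      (fun u => u ^ (β - 1) * (u + (t - s)) ^ (β - 1)) x) t,
      integral_indicator measurableSet_Ioi, h2, abs_sub_comm, abs_of_pos (sub_pos.2 h)]

theorem intervalIntegral_rpow_mul_eq_integral_rlKernel_mul {a b β x : ℝ} {f : ℝ → ℝ} (hβ : β ≠ 1)
    (hf : ∀ s ∉ Ioo a b, f s = 0) (hx : a ≤ x) :
    ∫ s in a..x, (x - s) ^ (β - 1) * f s = ∫ s, rlKernel β (x - s) * f s := by
  rw [intervalIntegral.integral_of_le hx, ← integral_indicator measurableSet_Ioc]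
  congr 1
  funext s
  by_cases hs : s ∈ Ioc a x
  · rw [indicator_of_mem hs]
    rcases hs.2.eq_or_lt with rfl | hlt
    · rw [sub_self, Real.zero_rpow (sub_ne_zero.2 hβ), rlKernel_of_nonpos β le_rfl]
    · rw [rlKernel_of_pos β (sub_pos.2 hlt)]
  · rw [indicator_of_notMem hs]
    rcases le_or_gt s a with hsa | hsa
    · rw [hf s (fun h => absurd h.1 (not_lt.2 hsa)), mul_zero]
    · have : x < s := by
        by_contra! h
        exact hs ⟨hsa, h⟩
      rw [rlKernel_of_nonpos β (by linarith), zero_mul]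

theorem integrable_indicator_rpow {β : ℝ} (hβ : 0 < β) (L : ℝ) :
    Integrable ((Ioo 0 L).indicator fun t : ℝ => t ^ (β - 1)) := by
  rcases le_or_gt L 0 with hL | hL
  · simp [Ioo_eq_empty (not_lt.2 hL)]
  · rw [integrable_indicator_iff measurableSet_Ioo, ← integrableOn_Ioc_iff_integrableOn_Ioo]
    exact (intervalIntegrable_iff_integrableOn_Ioc_of_le hL.le).1
      (intervalIntegral.intervalIntegrable_rpow' (by linarith))

theorem rlKernel_mul_eq_indicator_mul {a b β x s : ℝ} {f : ℝ → ℝ}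
    (hf : ∀ s ∉ Ioo a b, f s = 0) (hx : x ≤ b) :
    rlKernel β (x - s) * f s = (Ioo 0 (b - a)).indicator (fun t : ℝ => t ^ (β - 1)) (x - s) * f s := by
  by_cases hs : s ∈ Ioo a b
  · by_cases hxs : 0 < x - s
    · rw [rlKernel_of_pos β hxs, indicator_of_mem]
      exact ⟨hxs, by linarith [hs.1]⟩
    · rw [rlKernel_of_nonpos β (not_lt.1 hxs), indicator_of_notMem]
      exact fun h => hxs h.1
  · rw [hf s hs, mul_zero, mul_zero]

section OneDimensional

variable {a b : ℝ} {f : ℝ → ℝ}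

theorem integrable_of_eq_zero_off_Ioo (hfc : Continuous f) (hf : ∀ s ∉ Ioo a b, f s = 0) :
    Integrable f := by
  exact hfc.integrable_of_hasCompactSupport (HasCompactSupport.intro (isCompact_Icc (a := a) (b := b))
    fun x hx => hf x fun h => hx (Ioo_subset_Icc_self h))

theorem exists_bound_of_eq_zero_off_Ioo (hfc : Continuous f) (hf : ∀ s ∉ Ioo a b, f s = 0) :
    ∃ C, ∀ x, ‖f x‖ ≤ C :=
  HasCompactSupport.exists_bound_of_continuous
    (HasCompactSupport.intro (isCompact_Icc (a := a) (b := b)) fun x hx => hf x fun h => hx (Ioo_subset_Icc_self h)) hfc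

theorem integrable_prod_mul_rlKernel {α : ℝ} (hα : 0 < α) (hfc : Continuous f)
    (hf : ∀ s ∉ Ioo a b, f s = 0) :
    Integrable (fun p : ℝ × ℝ => f p.1 * (rlKernel α (p.1 - p.2) * f p.2)) := by
  obtain ⟨C, hC⟩ := exists_bound_of_eq_zero_off_Ioo hfc hf
  have h1 := Integrable.convolution_integrand (ContinuousLinearMap.mul ℝ ℝ)
    (integrable_of_eq_zero_off_Ioo hfc hf) (integrable_indicator_rpow hα (b - a))
  have h2 := h1.bdd_mul (f := fun p : ℝ × ℝ => f p.1) (c := C)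
    (by fun_prop) (Filter.Eventually.of_forall fun p => hC p.1)
  refine h2.congr (Filter.Eventually.of_forall fun p => ?_)
  simp only [ContinuousLinearMap.mul_apply']
  by_cases hp : p.1 ∈ Ioo a b
  · rw [rlKernel_mul_eq_indicator_mul hf hp.2.le, mul_comm (f p.2)]
  · rw [hf _ hp, zero_mul, zero_mul]

theorem integrable_and_integral_prod_abs_rpow {α : ℝ} (hα0 : 0 < α) (hα1 : α < 1)
    (hfc : Continuous f) (hf : ∀ s ∉ Ioo a b, f s = 0) :
    Integrable (fun p : ℝ × ℝ => f p.1 * f p.2 * |p.1 - p.2| ^ (α - 1)) ∧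
      ∫ p : ℝ × ℝ, f p.1 * f p.2 * |p.1 - p.2| ^ (α - 1) =
        2 * ∫ x, f x * ∫ s, rlKernel α (x - s) * f s := by
  have h1 := integrable_prod_mul_rlKernel hα0 hfc hf
  have key : (fun p : ℝ × ℝ => f p.1 * f p.2 * |p.1 - p.2| ^ (α - 1)) =
      (fun p : ℝ × ℝ => f p.1 * (rlKernel α (p.1 - p.2) * f p.2)) +
        fun p : ℝ × ℝ => f p.swap.1 * (rlKernel α (p.swap.1 - p.swap.2) * f p.swap.2) := by
    funext p
    rw [← rlKernel_add_rlKernel_neg hα1.ne]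
    simp only [Pi.add_apply, Prod.fst_swap, Prod.snd_swap, neg_sub]
    ring
  have h2 : Integrable
      fun p : ℝ × ℝ => f p.swap.1 * (rlKernel α (p.swap.1 - p.swap.2) * f p.swap.2) := h1.swap
  rw [key]
  refine ⟨h1.add h2, ?_⟩
  rw [integral_add' h1 h2, Measure.volume_eq_prod,
    integral_prod_swap (fun p : ℝ × ℝ => f p.1 * (rlKernel α (p.1 - p.2) * f p.2)), ← two_mul,
    integral_prod _ h1]
  simp only [integral_const_mul]

theorem integrable_and_integral_sq_rlKernel {β : ℝ} (hβ0 : 0 < β) (hβ1 : β < 1 / 2)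
    (hfc : Continuous f) (hf : ∀ s ∉ Ioo a b, f s = 0) :
    Integrable (fun x => (∫ s, rlKernel β (x - s) * f s) ^ 2) ∧
      ∫ x, (∫ s, rlKernel β (x - s) * f s) ^ 2 =
        Real.Gamma (1 - 2 * β) * Real.Gamma β / Real.Gamma (1 - β) *
          (2 * ∫ x, f x * ∫ s, rlKernel (2 * β) (x - s) * f s) := by
  obtain ⟨hK, hKint⟩ := integrable_and_integral_prod_abs_rpow (α := 2 * β) (by linarith)
    (by linarith) hfc hf
  set B := Real.Gamma (1 - 2 * β) * Real.Gamma β / Real.Gamma (1 - β) with hB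
  set F : ℝ × (ℝ × ℝ) → ℝ := fun q =>
    (rlKernel β (q.1 - q.2.1) * f q.2.1) * (rlKernel β (q.1 - q.2.2) * f q.2.2) with hF
  have hne : ∀ᵐ p : ℝ × ℝ, p.1 ≠ p.2 := by
    rw [Measure.volume_eq_prod]
    refine (Measure.ae_prod_iff_ae_ae (measurableSet_eq_fun measurable_fst measurable_snd).compl).2
      (Filter.Eventually.of_forall fun x => ?_)
    filter_upwards [Measure.ae_ne volume x] with y hy using hy.symm
  have hmeas : Measurable F := by
    have := measurable_rlKernel β
    have := hfc.measurable
    simp only [hF]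
    fun_prop
  have hFeq : ∀ x s t, F (x, (s, t)) =
      f s * f t * (rlKernel β (x - s) * rlKernel β (x - t)) := by
    intro x s t
    simp only [hF]
    ring
  have hFn : ∀ x s t, ‖F (x, (s, t))‖ =
      ‖f s * f t‖ * (rlKernel β (x - s) * rlKernel β (x - t)) := by
    intro x s t
    rw [hFeq, norm_mul, Real.norm_of_nonneg (mul_nonneg (rlKernel_nonneg _ _) (rlKernel_nonneg _ _))]
  have hint : Integrable F (volume.prod volume) := by
    rw [integrable_prod_iff' hmeas.aestronglyMeasurable]
    constructor
    · filter_upwards [hne] with p hp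
      simp only [hFeq]
      exact (integrable_and_integral_rlKernel_mul_rlKernel hβ0 hβ1 hp).1.const_mul _
    · refine (hK.norm.const_mul B).congr ?_
      filter_upwards [hne] with p hp
      simp only [hFn]
      rw [integral_const_mul, (integrable_and_integral_rlKernel_mul_rlKernel hβ0 hβ1 hp).2,
        norm_mul, Real.norm_of_nonneg (Real.rpow_nonneg (abs_nonneg (p.1 - p.2)) _)]
      ring
  have hsq : ∀ x, ∫ p, F (x, p) = (∫ s, rlKernel β (x - s) * f s) ^ 2 := by
    intro x
    simp only [hF]
    rw [Measure.volume_eq_prod, integral_prod_mul (fun s => rlKernel β (x - s) * f s)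
      (fun s => rlKernel β (x - s) * f s), sq]
  constructor
  · simpa only [hsq] using hint.integral_prod_left
  · have h := integral_integral_swap (f := fun x p => F (x, p)) hint
    simp only [hsq] at h
    rw [h, ← hKint, ← integral_const_mul]
    refine integral_congr_ae ?_
    filter_upwards [hne] with p hp
    simp only [hFeq]
    rw [integral_const_mul, (integrable_and_integral_rlKernel_mul_rlKernel hβ0 hβ1 hp).2]
    ring

theorem cos_mul_Gamma_div_Gamma {β : ℝ} (hβ0 : 0 < β) (hβ1 : β < 1 / 2) :
    Real.cos (Real.pi * β) * (Real.Gamma (1 - 2 * β) * Real.Gamma β / Real.Gamma (1 - β) * 2) *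
      Real.Gamma (2 * β) = Real.Gamma β ^ 2 := by
  have h1 := Real.Gamma_mul_Gamma_one_sub β
  have h2 := Real.Gamma_mul_Gamma_one_sub (2 * β)
  have hs : 0 < Real.sin (Real.pi * β) := by
    apply Real.sin_pos_of_pos_of_lt_pi <;> nlinarith [Real.pi_pos]
  have hc : 0 < Real.cos (Real.pi * β) := by
    apply Real.cos_pos_of_mem_Ioo
    constructor <;> nlinarith [Real.pi_pos]
  rw [show Real.pi * (2 * β) = 2 * (Real.pi * β) by ring, Real.sin_two_mul] at h2
  have hG : 0 < Real.Gamma (1 - β) := Real.Gamma_pos_of_pos (by linarith)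
  rw [eq_div_iff hs.ne'] at h1
  rw [eq_div_iff (by positivity)] at h2
  rw [show Real.cos (Real.pi * β) *
      (Real.Gamma (1 - 2 * β) * Real.Gamma β / Real.Gamma (1 - β) * 2) * Real.Gamma (2 * β) =
      Real.cos (Real.pi * β) * (Real.Gamma (1 - 2 * β) * Real.Gamma β * 2) * Real.Gamma (2 * β) /
        Real.Gamma (1 - β) by ring, div_eq_iff hG.ne']
  apply mul_right_cancel₀ hs.ne'
  linear_combination Real.Gamma β * h2 - Real.Gamma β * h1

theorem cos_mul_integral_sq_le_integral_mul {α : ℝ} (hα0 : 0 < α) (hα1 : α < 1)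
    (hfc : Continuous f) (hf : ∀ s ∉ Ioo a b, f s = 0) :
    Real.cos (α * Real.pi / 2) *
        ∫ x in Ioo a b, (1 / Real.Gamma (α / 2) * ∫ s in a..x, (x - s) ^ (α / 2 - 1) * f s) ^ 2 ≤
      ∫ x in Ioo a b, f x * (1 / Real.Gamma α * ∫ s in a..x, (x - s) ^ (α - 1) * f s) := by
  have hβ0 : 0 < α / 2 := by linarith
  have hβ1 : α / 2 < 1 / 2 := by linarith
  obtain ⟨hint, heq⟩ := integrable_and_integral_sq_rlKernel hβ0 hβ1 hfc hf
  have hcos := cos_mul_Gamma_div_Gamma hβ0 hβ1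
  rw [mul_div_cancel₀ α two_ne_zero] at heq hcos
  rw [show Real.pi * (α / 2) = α * Real.pi / 2 by ring] at hcos
  have hc : 0 ≤ Real.cos (α * Real.pi / 2) := by
    apply Real.cos_nonneg_of_mem_Icc
    constructor <;> nlinarith [Real.pi_pos]
  have hG : 0 < Real.Gamma (α / 2) := Real.Gamma_pos_of_pos hβ0
  have hG' : 0 < Real.Gamma α := Real.Gamma_pos_of_pos hα0
  have hL : ∫ x in Ioo a b,
      (1 / Real.Gamma (α / 2) * ∫ s in a..x, (x - s) ^ (α / 2 - 1) * f s) ^ 2 ≤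
      (1 / Real.Gamma (α / 2)) ^ 2 * ∫ x, (∫ s, rlKernel (α / 2) (x - s) * f s) ^ 2 := by
    have : ∀ x ∈ Ioo a b,
        (1 / Real.Gamma (α / 2) * ∫ s in a..x, (x - s) ^ (α / 2 - 1) * f s) ^ 2 =
        (1 / Real.Gamma (α / 2)) ^ 2 * (∫ s, rlKernel (α / 2) (x - s) * f s) ^ 2 := by
      intro x hx
      rw [intervalIntegral_rpow_mul_eq_integral_rlKernel_mul (by linarith) hf hx.1.le, mul_pow]
    rw [setIntegral_congr_fun measurableSet_Ioo this, integral_const_mul]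
    exact mul_le_mul_of_nonneg_left
      (setIntegral_le_integral hint (Filter.Eventually.of_forall fun x => sq_nonneg _))
      (sq_nonneg _)
  have hR : ∫ x in Ioo a b, f x * (1 / Real.Gamma α * ∫ s in a..x, (x - s) ^ (α - 1) * f s) =
      1 / Real.Gamma α * ∫ x, f x * ∫ s, rlKernel α (x - s) * f s := by
    have : ∀ x ∈ Ioo a b, f x * (1 / Real.Gamma α * ∫ s in a..x, (x - s) ^ (α - 1) * f s) =
        1 / Real.Gamma α * (f x * ∫ s, rlKernel α (x - s) * f s) := by
      intro x hx
      rw [intervalIntegral_rpow_mul_eq_integral_rlKernel_mul hα1.ne hf hx.1.le, mul_left_comm]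
    rw [setIntegral_congr_fun measurableSet_Ioo this, integral_const_mul,
      setIntegral_eq_integral_of_forall_compl_eq_zero]
    intro x hx
    rw [hf x hx, zero_mul]
  refine (mul_le_mul_of_nonneg_left hL hc).trans_eq ?_
  rw [hR, heq]
  field_simp
  field_simp at hcos
  linear_combination (∫ x, f x * ∫ s, rlKernel α (x - s) * f s) * hcos

end OneDimensional

section TwoDimensional

variable {a b c d : ℝ} {p : ℝ × ℝ → ℝ}

theorem exists_continuous_eqOn_leftRLx {α : ℝ} (hα0 : 0 < α) (hα1 : α ≠ 1) (hpc : Continuous p)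
    (hp : ∀ z ∉ Ioo a b ×ˢ Ioo c d, p z = 0) :
    ∃ G : ℝ × ℝ → ℝ, Continuous G ∧ EqOn (leftRLx a α p) G (Ioo a b ×ˢ Ioo c d) := by
  obtain ⟨C, hC⟩ := HasCompactSupport.exists_bound_of_continuous
    (HasCompactSupport.intro
      ((isCompact_Icc (a := a) (b := b)).prod (isCompact_Icc (a := c) (b := d)))
      fun z hz => hp z fun h => hz (prod_mono Ioo_subset_Icc_self Ioo_subset_Icc_self h)) hpc
  set g := (Ioo 0 (b - a)).indicator fun t : ℝ => t ^ (α - 1) with hg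
  have hgi : Integrable g := integrable_indicator_rpow hα0 (b - a)
  refine ⟨fun z => 1 / Real.Gamma α * ∫ u, g u * p (z.1 - u, z.2), ?_, ?_⟩
  · refine continuous_const.mul (continuous_of_dominated (bound := fun u => ‖g u‖ * C) ?_ ?_
      (hgi.norm.mul_const C) ?_)
    · exact fun z => hgi.aestronglyMeasurable.mul (by fun_prop)
    · refine fun z => Filter.Eventually.of_forall fun u => ?_
      rw [norm_mul]
      exact mul_le_mul_of_nonneg_left (hC _) (norm_nonneg _)
    · exact Filter.Eventually.of_forall fun u => by fun_prop
  · intro z hz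
    have hf : ∀ s ∉ Ioo a b, p (s, z.2) = 0 := fun s hs => hp _ fun h => hs h.1
    simp only [leftRLx]
    rw [intervalIntegral_rpow_mul_eq_integral_rlKernel_mul (f := fun s => p (s, z.2)) hα1 hf
      hz.1.1.le, ← integral_sub_left_eq_self (fun u => g u * p (z.1 - u, z.2)) volume z.1]
    simp only [sub_sub_cancel]
    congr 2
    funext s
    exact rlKernel_mul_eq_indicator_mul (f := fun s => p (s, z.2)) hf hz.1.2.le

theorem integrableOn_Ioo_prod_of_eqOn {F G : ℝ × ℝ → ℝ} (hG : Continuous G)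
    (h : EqOn F G (Ioo a b ×ˢ Ioo c d)) : IntegrableOn F (Ioo a b ×ˢ Ioo c d) := by
  have hm : MeasurableSet (Ioo a b ×ˢ Ioo c d) := measurableSet_Ioo.prod measurableSet_Ioo
  refine IntegrableOn.congr_fun ?_ h.symm hm
  exact (hG.continuousOn.integrableOn_compact (isCompact_Icc.prod isCompact_Icc)).mono_set
    (prod_mono Ioo_subset_Icc_self Ioo_subset_Icc_self)

theorem integrableOn_mul_leftRLx {α : ℝ} (hα0 : 0 < α) (hα1 : α ≠ 1) (hpc : Continuous p)
    (hp : ∀ z ∉ Ioo a b ×ˢ Ioo c d, p z = 0) :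
    IntegrableOn (fun z => p z * leftRLx a α p z) (Ioo a b ×ˢ Ioo c d) := by
  obtain ⟨G, hG, hGe⟩ := exists_continuous_eqOn_leftRLx hα0 hα1 hpc hp
  exact integrableOn_Ioo_prod_of_eqOn (hpc.mul hG) fun z hz => by
    rw [hGe hz, Pi.mul_apply]

theorem integrableOn_leftRLx_sq {α : ℝ} (hα0 : 0 < α) (hα1 : α ≠ 1) (hpc : Continuous p)
    (hp : ∀ z ∉ Ioo a b ×ˢ Ioo c d, p z = 0) :
    IntegrableOn (fun z => leftRLx a α p z ^ 2) (Ioo a b ×ˢ Ioo c d) := by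
  obtain ⟨G, hG, hGe⟩ := exists_continuous_eqOn_leftRLx hα0 hα1 hpc hp
  exact integrableOn_Ioo_prod_of_eqOn (hG.pow 2) fun z hz => by
    simp only [hGe hz, Pi.pow_apply]

theorem setIntegral_prod_right {F : ℝ × ℝ → ℝ} {s t : Set ℝ} (hF : IntegrableOn F (s ×ˢ t)) :
    IntegrableOn (fun y => ∫ x in s, F (x, y)) t ∧
      ∫ z in s ×ˢ t, F z = ∫ y in t, ∫ x in s, F (x, y) := by
  rw [IntegrableOn, Measure.volume_eq_prod, ← Measure.prod_restrict] at hF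
  refine ⟨hF.integral_prod_right, ?_⟩
  rw [Measure.volume_eq_prod, ← Measure.prod_restrict, integral_prod_symm _ hF]

theorem cos_mul_integral_leftRLx_sq_le {α : ℝ} (hα0 : 0 < α) (hα1 : α < 1) (hpc : Continuous p)
    (hp : ∀ z ∉ Ioo a b ×ˢ Ioo c d, p z = 0) :
    Real.cos (α * Real.pi / 2) * ∫ z in Ioo a b ×ˢ Ioo c d, leftRLx a (α / 2) p z ^ 2 ≤
      ∫ z in Ioo a b ×ˢ Ioo c d, p z * leftRLx a α p z := by
  obtain ⟨h1, h2⟩ := setIntegral_prod_right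
    (integrableOn_leftRLx_sq (α := α / 2) (by linarith) (by linarith) hpc hp)
  obtain ⟨h3, h4⟩ := setIntegral_prod_right (integrableOn_mul_leftRLx hα0 hα1.ne hpc hp)
  rw [h2, h4, ← integral_const_mul]
  refine setIntegral_mono (h1.const_mul _) h3 fun y => ?_
  exact cos_mul_integral_sq_le_integral_mul (f := fun x => p (x, y)) hα0 hα1 (by fun_prop)
    fun s hs => hp _ fun h => hs h.1

theorem eq_zero_comp_swap (hp : ∀ z ∉ Ioo a b ×ˢ Ioo c d, p z = 0) :
    ∀ z ∉ Ioo c d ×ˢ Ioo a b, (p ∘ Prod.swap) z = 0 :=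
  fun z hz => hp z.swap fun h => hz ⟨h.2, h.1⟩

theorem integrableOn_prod_comp_swap {F : ℝ × ℝ → ℝ} {s t : Set ℝ} (hF : IntegrableOn F (s ×ˢ t)) :
    IntegrableOn (fun z => F z.swap) (t ×ˢ s) := by
  rw [IntegrableOn, Measure.volume_eq_prod, ← Measure.prod_restrict] at hF ⊢
  exact hF.swap

theorem integrableOn_mul_leftRLy {α : ℝ} (hα0 : 0 < α) (hα1 : α ≠ 1) (hpc : Continuous p)
    (hp : ∀ z ∉ Ioo a b ×ˢ Ioo c d, p z = 0) :
    IntegrableOn (fun z => p z * leftRLy c α p z) (Ioo a b ×ˢ Ioo c d) :=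
  integrableOn_prod_comp_swap
    (integrableOn_mul_leftRLx hα0 hα1 (hpc.comp continuous_swap) (eq_zero_comp_swap hp))

theorem integrableOn_leftRLy_sq {α : ℝ} (hα0 : 0 < α) (hα1 : α ≠ 1) (hpc : Continuous p)
    (hp : ∀ z ∉ Ioo a b ×ˢ Ioo c d, p z = 0) :
    IntegrableOn (fun z => leftRLy c α p z ^ 2) (Ioo a b ×ˢ Ioo c d) :=
  integrableOn_prod_comp_swap
    (integrableOn_leftRLx_sq hα0 hα1 (hpc.comp continuous_swap) (eq_zero_comp_swap hp))

theorem cos_mul_integral_leftRLy_sq_le {α : ℝ} (hα0 : 0 < α) (hα1 : α < 1) (hpc : Continuous p)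
    (hp : ∀ z ∉ Ioo a b ×ˢ Ioo c d, p z = 0) :
    Real.cos (α * Real.pi / 2) * ∫ z in Ioo a b ×ˢ Ioo c d, leftRLy c (α / 2) p z ^ 2 ≤
      ∫ z in Ioo a b ×ˢ Ioo c d, p z * leftRLy c α p z := by
  have h := cos_mul_integral_leftRLx_sq_le hα0 hα1 (hpc.comp continuous_swap)
    (eq_zero_comp_swap hp)
  rw [Measure.volume_eq_prod, ← setIntegral_prod_swap,
    ← setIntegral_prod_swap _ _ fun z => (p ∘ Prod.swap) z * _] at h
  exact h

end TwoDimensional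

theorem stmt16 (a b c d α₁ α₂ : ℝ) (hab : a < b) (hcd : c < d)
    (hα₁0 : 0 < α₁) (hα₁1 : α₁ < 1) (hα₂0 : 0 < α₂) (hα₂1 : α₂ < 1)
    (v : ℝ × ℝ → ℝ) (hv : ContDiff ℝ (⊤ : ℕ∞) v) (hcs : HasCompactSupport v)
    (hsupp : tsupport v ⊆ Set.Ioo a b ×ˢ Set.Ioo c d) :
    ∫ z in Set.Ioo a b ×ˢ Set.Ioo c d,
        (partialX v z * leftRLx a α₁ (partialX v) z +
          partialY v z * leftRLy c α₂ (partialY v) z) ≥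
      min (Real.cos (α₁ * Real.pi / 2)) (Real.cos (α₂ * Real.pi / 2)) *
        ∫ z in Set.Ioo a b ×ˢ Set.Ioo c d,
          ((leftRLx a (α₁ / 2) (partialX v) z) ^ 2 +
            (leftRLy c (α₂ / 2) (partialY v) z) ^ 2) := by
  have hzero : ∀ w, ∀ z ∉ Ioo a b ×ˢ Ioo c d, fderiv ℝ v z w = 0 := by
    intro w z hz
    rw [image_eq_zero_of_notMem_tsupport fun h => hz (hsupp (tsupport_fderiv_subset ℝ h)),
      zero_apply]
  have hcont : ∀ w, Continuous fun z => fderiv ℝ v z w := fun w =>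
    (hv.continuous_fderiv (by simp)).clm_apply continuous_const
  have hx0 : ∀ z ∉ Ioo a b ×ˢ Ioo c d, partialX v z = 0 := hzero (1, 0)
  have hy0 : ∀ z ∉ Ioo a b ×ˢ Ioo c d, partialY v z = 0 := hzero (0, 1)
  have hxc : Continuous (partialX v) := hcont (1, 0)
  have hyc : Continuous (partialY v) := hcont (0, 1)
  rw [ge_iff_le, integral_add (integrableOn_mul_leftRLx hα₁0 hα₁1.ne hxc hx0)
      (integrableOn_mul_leftRLy hα₂0 hα₂1.ne hyc hy0),
    integral_add (integrableOn_leftRLx_sq (by linarith) (by linarith) hxc hx0)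
      (integrableOn_leftRLy_sq (by linarith) (by linarith) hyc hy0), mul_add]
  refine add_le_add
    (le_trans ?_ (cos_mul_integral_leftRLx_sq_le hα₁0 hα₁1 hxc hx0))
    (le_trans ?_ (cos_mul_integral_leftRLy_sq_le hα₂0 hα₂1 hyc hy0))
  · exact mul_le_mul_of_nonneg_right (min_le_left _ _) (integral_nonneg fun z => sq_nonneg _)
  · exact mul_le_mul_of_nonneg_right (min_le_right _ _) (integral_nonneg fun z => sq_nonneg _)
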